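/- Suppose z, w in the first Weyl algebra A₁ satisfy [z,w] = 1 and z = f(p)q + g(p) for some f, g ∈ K[X] with f ≠ 0 (i.e., z has degree 1 in q). Then z = αq + g(p) with α ∈ K^*, and w = γ - α^{-1}p + h(z) for some γ ∈ K and h ∈ K[X]; in particular z and w generate A₁ as a K-algebra. -/

import Mathlib

/-- The defining relation of the first Weyl algebra: `p q = q p + 1`,
where `p` and `q` are the images of the generators `0` and `1`. -/
inductive WeylRel (K : Type) [Field K] :
    FreeAlgebra K (Fin 2) → FreeAlgebra K (Fin 2) → Prop
  | rel : WeylRel K (FreeAlgebra.ι K 0 * FreeAlgebra.ι K 1)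
      (FreeAlgebra.ι K 1 * FreeAlgebra.ι K 0 + 1)

/-- The first Weyl algebra `A₁` over `K`. -/
abbrev Weyl (K : Type) [Field K] := RingQuot (WeylRel K)

/-- The generator `p` of `A₁`. -/
noncomputable def Wp (K : Type) [Field K] : Weyl K :=
  RingQuot.mkAlgHom K (WeylRel K) (FreeAlgebra.ι K 0)

/-- The generator `q` of `A₁`. -/
noncomputable def Wq (K : Type) [Field K] : Weyl K :=
  RingQuot.mkAlgHom K (WeylRel K) (FreeAlgebra.ι K 1)

/-- The homogeneous component `D_t = span{p^i q^s : s - i = t}` of `A₁`. -/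
noncomputable def WeylD (K : Type) [Field K] (t : ℤ) : Submodule K (Weyl K) :=
  Submodule.span K {x | ∃ i s : ℕ, (s : ℤ) - (i : ℤ) = t ∧ x = Wp K ^ i * Wq K ^ s}

open Polynomial

/-- If `m b f' = f b'` with `b ≠ 0`, comparing leading coefficients gives `deg b = m deg f`. -/
theorem natDegree_eq_of_logDerivative {K : Type*} [Field K] [CharZero K] {f b : K[X]} {m : ℕ}
    (hf : f ≠ 0) (hb : b ≠ 0) (h : (m : K[X]) * b * derivative f = f * derivative b) :
    b.natDegree = m * f.natDegree := by
  have hX : ∀ a : K[X], (X * derivative a).natDegree ≤ a.natDegree ∧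
      (X * derivative a).coeff a.natDegree = a.natDegree * a.leadingCoeff := by
    intro a
    have hc : ∀ k, (X * derivative a).coeff k = k * a.coeff k := by
      rintro (_ | k)
      · simp
      · simp [coeff_X_mul, coeff_derivative, mul_comm]
    refine ⟨natDegree_le_iff_coeff_eq_zero.2 fun k hk => ?_, hc _⟩
    rw [hc, coeff_eq_zero_of_natDegree_lt hk, mul_zero]
  have h' : C (m : K) * (b * (X * derivative f)) = (X * derivative b) * f := by
    rw [map_natCast]
    linear_combination X * h
  have hco := congrArg (fun a => coeff a (b.natDegree + f.natDegree)) h'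
  simp only [coeff_C_mul] at hco
  rw [coeff_mul_add_eq_of_natDegree_le le_rfl (hX f).1, coeff_mul_add_eq_of_natDegree_le (hX b).1 le_rfl,
    (hX f).2, (hX b).2, coeff_natDegree, coeff_natDegree] at hco
  have hne : b.leadingCoeff * f.leadingCoeff ≠ 0 := by simp [hf, hb]
  have : (b.natDegree : K) = ((m * f.natDegree : ℕ) : K) := by
    apply mul_right_cancel₀ hne
    push_cast
    linear_combination -hco
  exact_mod_cast this

/-- The solutions `b` of `m b f' = f b'` are the scalar multiples of `f ^ m`. -/
theorem exists_eq_C_mul_pow_of_logDerivative {K : Type*} [Field K] [CharZero K] {f b : K[X]}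
    {m : ℕ} (hf : f ≠ 0) (h : (m : K[X]) * b * derivative f = f * derivative b) :
    ∃ c : K, b = C c * f ^ m := by
  have hpow : (m : K[X]) * f ^ m * derivative f = f * derivative (f ^ m) := by
    rcases m with _ | m
    · simp
    · rw [derivative_pow_succ, map_add, map_natCast, map_one]
      push_cast
      ring
  have hfm : (f ^ m).coeff (m * f.natDegree) ≠ 0 := by
    rw [← natDegree_pow, coeff_natDegree]
    simp [hf]
  set c : K := b.coeff (m * f.natDegree) / (f ^ m).coeff (m * f.natDegree) with hc
  refine ⟨c, sub_eq_zero.1 (by_contra fun hne => ?_)⟩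
  have hdeg := natDegree_eq_of_logDerivative (m := m) hf hne (by
    simp only [derivative_sub, derivative_C_mul]
    linear_combination h - C c * hpow)
  apply hne
  rw [← leadingCoeff_eq_zero, leadingCoeff, hdeg, coeff_sub, coeff_C_mul, hc,
    div_mul_cancel₀ _ hfm, sub_self]

section NormalOrdering

variable {K A : Type*} [Field K] [Ring A] [Algebra K A]

/-- The span of the elements `a(p) q^k` with `k < n`. -/
noncomputable def normalFiltration (K : Type*) {A : Type*} [Field K] [Ring A] [Algebra K A]
    (p q : A) : ℕ → Submodule K A
  | 0 => ⊥
  | n + 1 => normalFiltration K p q n ⊔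
      LinearMap.range ((LinearMap.mulRight K (q ^ n)).comp (aeval (R := K) p).toLinearMap)

theorem mem_normalFiltration_succ {p q x : A} {n : ℕ} :
    x ∈ normalFiltration K p q (n + 1) ↔
      ∃ r ∈ normalFiltration K p q n, ∃ a : K[X], r + aeval p a * q ^ n = x := by
  simp [normalFiltration, Submodule.mem_sup]

theorem normalFiltration_mono {p q : A} : Monotone (normalFiltration K p q) :=
  monotone_nat_of_le_succ fun _ => le_sup_left

theorem aeval_mul_pow_mem_normalFiltration {p q : A} {k n : ℕ} (h : k < n) (a : K[X]) :
    aeval p a * q ^ k ∈ normalFiltration K p q n :=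
  normalFiltration_mono h (mem_normalFiltration_succ.2 ⟨0, zero_mem _, a, zero_add _⟩)

theorem aeval_mul_mem_normalFiltration {p q x : A} {n : ℕ} (a : K[X])
    (hx : x ∈ normalFiltration K p q n) : aeval p a * x ∈ normalFiltration K p q n := by
  induction n generalizing x with
  | zero => simp_all [normalFiltration]
  | succ n ih =>
    obtain ⟨r, hr, b, rfl⟩ := mem_normalFiltration_succ.1 hx
    exact mem_normalFiltration_succ.2 ⟨_, ih hr, a * b, by rw [map_mul, mul_add, mul_assoc]⟩

variable {p q : A} (hpq : p * q = q * p + 1)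
include hpq

theorem right_mul_aeval (a : K[X]) :
    q * aeval p a = aeval p a * q - aeval p (derivative a) := by
  induction a using Polynomial.induction_on' with
  | add a b ha hb =>
    simp only [map_add, mul_add, add_mul, ha, hb]
    abel
  | monomial n c =>
    have hpow : q * p ^ n = p ^ n * q - n * p ^ (n - 1) := by
      induction n with
      | zero => simp
      | succ n ih =>
        have hn : (n : A) * p ^ (n - 1) * p = n * p ^ n := by
          rcases n with _ | n
          · simp
          · rw [mul_assoc, Nat.add_sub_cancel, ← pow_succ]
        have hqp : q * p = p * q - 1 := by rw [hpq, add_sub_cancel_right]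
        rw [pow_succ, ← mul_assoc, ih, sub_mul, hn, mul_assoc, hqp, Nat.add_sub_cancel]
        push_cast
        noncomm_ring
    rw [derivative_monomial, aeval_monomial, aeval_monomial, ← mul_assoc,
      ← Algebra.commutes, mul_assoc, hpow, mul_sub, map_mul, map_natCast]
    simp only [mul_assoc]

theorem left_mul_mem_normalFiltration {x : A} {n : ℕ}
    (hx : x ∈ normalFiltration K p q n) : q * x ∈ normalFiltration K p q (n + 1) := by
  induction n generalizing x with
  | zero => simp_all [normalFiltration]
  | succ n ih =>
    obtain ⟨r, hr, b, rfl⟩ := mem_normalFiltration_succ.1 hx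
    have : q * (r + aeval p b * q ^ n) =
        q * r - aeval p (derivative b) * q ^ n + aeval p b * q ^ (n + 1) := by
      rw [mul_add, ← mul_assoc, right_mul_aeval hpq, pow_succ']
      noncomm_ring
    rw [this]
    exact mem_normalFiltration_succ.2 ⟨_, sub_mem (ih hr)
      (aeval_mul_pow_mem_normalFiltration (Nat.lt_succ_self n) _), b, rfl⟩

theorem pow_mul_aeval_sub_mem (a : K[X]) (n : ℕ) :
    q ^ n * aeval p a - aeval p a * q ^ n ∈ normalFiltration K p q n := by
  induction n with
  | zero => simp
  | succ n ih =>
    have : q ^ (n + 1) * aeval p a - aeval p a * q ^ (n + 1) =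
        q * (q ^ n * aeval p a - aeval p a * q ^ n) - aeval p (derivative a) * q ^ n := by
      rw [mul_sub, ← mul_assoc q (aeval p a), right_mul_aeval hpq, pow_succ']
      noncomm_ring
    rw [this]
    exact sub_mem (left_mul_mem_normalFiltration hpq ih)
      (aeval_mul_pow_mem_normalFiltration (Nat.lt_succ_self n) _)

theorem pow_mul_aeval_mul_sub_mem (a : K[X]) (n : ℕ) :
    (q ^ n * aeval p a - aeval p a * q ^ n) * q + n * aeval p (derivative a) * q ^ n ∈
      normalFiltration K p q n := by
  induction n with
  | zero => simp
  | succ n ih =>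
    have : (q ^ (n + 1) * aeval p a - aeval p a * q ^ (n + 1)) * q +
          (n + 1 : ℕ) * aeval p (derivative a) * q ^ (n + 1) =
        q * ((q ^ n * aeval p a - aeval p a * q ^ n) * q + n * aeval p (derivative a) * q ^ n) +
          aeval p ((n : K[X]) * derivative (derivative a)) * q ^ n := by
      have h₁ : q * (aeval p a * (q * q ^ n)) =
          aeval p a * (q * (q * q ^ n)) - aeval p (derivative a) * (q * q ^ n) := by
        rw [← mul_assoc, right_mul_aeval hpq, sub_mul, mul_assoc]
      have h₂ : q * (n * (aeval p (derivative a) * q ^ n)) =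
          n * (aeval p (derivative a) * (q * q ^ n)) -
            n * (aeval p (derivative (derivative a)) * q ^ n) := by
        rw [← mul_assoc q, ← Nat.cast_comm, mul_assoc, ← mul_assoc q, right_mul_aeval hpq,
          sub_mul, mul_sub, mul_assoc (aeval p (derivative a))]
      have h₃ : q ^ n * q = q * q ^ n := (pow_succ q n).symm.trans (pow_succ' q n)
      simp only [pow_succ', map_mul, map_natCast, Nat.cast_add, Nat.cast_one, mul_add, mul_sub,
        sub_mul, add_mul, mul_assoc, one_mul, h₁, h₂, h₃]
      abel
    rw [this]
    exact add_mem (left_mul_mem_normalFiltration hpq ih)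
      (aeval_mul_pow_mem_normalFiltration (Nat.lt_succ_self n) _)

theorem degree_one_mul_mem {x : A} {n : ℕ} (f g : K[X]) (hx : x ∈ normalFiltration K p q n) :
    (aeval p f * q + aeval p g) * x ∈ normalFiltration K p q (n + 1) := by
  rw [add_mul, mul_assoc]
  exact add_mem (aeval_mul_mem_normalFiltration f (left_mul_mem_normalFiltration hpq hx))
    (normalFiltration_mono n.le_succ (aeval_mul_mem_normalFiltration g hx))

theorem degree_one_pow_sub_mem (f g : K[X]) (n : ℕ) :
    (aeval p f * q + aeval p g) ^ n - aeval p (f ^ n) * q ^ n ∈ normalFiltration K p q n := by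
  induction n with
  | zero => simp
  | succ n ih =>
    set z := aeval p f * q + aeval p g with hz
    have : z ^ (n + 1) - aeval p (f ^ (n + 1)) * q ^ (n + 1) =
        z * (z ^ n - aeval p (f ^ n) * q ^ n) +
          aeval p (g * f ^ n - f * derivative (f ^ n)) * q ^ n := by
      have h₁ : q * (aeval p (f ^ n) * q ^ n) =
          aeval p (f ^ n) * (q * q ^ n) - aeval p (derivative (f ^ n)) * q ^ n := by
        rw [← mul_assoc, right_mul_aeval hpq, sub_mul, mul_assoc]
      have h₂ : z * (aeval p (f ^ n) * q ^ n) =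
          aeval p f * (aeval p (f ^ n) * (q * q ^ n)) -
            aeval p f * (aeval p (derivative (f ^ n)) * q ^ n) +
            aeval p g * (aeval p (f ^ n) * q ^ n) := by
        rw [hz, add_mul, mul_assoc, h₁, mul_sub]
      rw [mul_sub, h₂, pow_succ' z, pow_succ' q, pow_succ' f, map_mul, map_sub, map_mul, map_mul]
      simp only [sub_mul, mul_assoc]
      abel
    rw [this]
    exact add_mem (degree_one_mul_mem hpq f g ih)
      (aeval_mul_pow_mem_normalFiltration (Nat.lt_succ_self n) _)

theorem degree_one_commutator_sub_mem (f g b : K[X]) (n : ℕ) :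
    (aeval p f * q + aeval p g) * (aeval p b * q ^ n) -
        (aeval p b * q ^ n) * (aeval p f * q + aeval p g) -
        aeval p ((n : K[X]) * b * derivative f - f * derivative b) * q ^ n ∈
      normalFiltration K p q n := by
  have h₁ : q * (aeval p b * q ^ n) =
      aeval p b * (q * q ^ n) - aeval p (derivative b) * q ^ n := by
    rw [← mul_assoc, right_mul_aeval hpq, sub_mul, mul_assoc]
  have hcomm : ∀ a c : K[X], ∀ x : A,
      aeval p a * (aeval p c * x) = aeval p c * (aeval p a * x) := by
    intro a c x
    rw [← mul_assoc, ← mul_assoc, ← map_mul, ← map_mul, mul_comm]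
  have h₃ : q ^ n * q = q * q ^ n := (pow_succ q n).symm.trans (pow_succ' q n)
  have h₄ : ∀ x : A, (n : A) * (aeval p b * x) = aeval p b * (n * x) := by
    intro x
    rw [← mul_assoc, Nat.cast_comm, mul_assoc]
  have : (aeval p f * q + aeval p g) * (aeval p b * q ^ n) -
        (aeval p b * q ^ n) * (aeval p f * q + aeval p g) -
        aeval p ((n : K[X]) * b * derivative f - f * derivative b) * q ^ n =
      -(aeval p b * ((q ^ n * aeval p f - aeval p f * q ^ n) * q +
        n * aeval p (derivative f) * q ^ n)) -
      aeval p b * (q ^ n * aeval p g - aeval p g * q ^ n) := by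
    simp only [map_sub, map_mul, map_natCast, mul_add, mul_sub, sub_mul, add_mul, mul_assoc, h₁,
      h₃, h₄, hcomm f b, hcomm g b]
    abel
  rw [this]
  exact sub_mem (neg_mem (aeval_mul_mem_normalFiltration b (pow_mul_aeval_mul_sub_mem hpq f n)))
    (aeval_mul_mem_normalFiltration b (pow_mul_aeval_sub_mem hpq g n))

theorem degree_one_commutator_mem {x : A} {n : ℕ} (f g : K[X])
    (hx : x ∈ normalFiltration K p q n) :
    (aeval p f * q + aeval p g) * x - x * (aeval p f * q + aeval p g) ∈
      normalFiltration K p q n := by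
  induction n generalizing x with
  | zero => simp_all [normalFiltration]
  | succ n ih =>
    obtain ⟨r, hr, b, rfl⟩ := mem_normalFiltration_succ.1 hx
    refine mem_normalFiltration_succ.2
      ⟨_, add_mem (ih hr) (degree_one_commutator_sub_mem hpq f g b n),
        (n : K[X]) * b * derivative f - f * derivative b, ?_⟩
    rw [mul_add _ r, add_mul r]
    abel

theorem commutator_aeval_mul_pow (a : K[X]) (n : ℕ) :
    p * (aeval p a * q ^ (n + 1)) - aeval p a * q ^ (n + 1) * p =
      aeval p (((n : K[X]) + 1) * a) * q ^ n := by
  have hpow : ∀ k : ℕ, p * q ^ (k + 1) - q ^ (k + 1) * p = ((k : A) + 1) * q ^ k := by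
    intro k
    induction k with
    | zero => simp [hpq]
    | succ k ih =>
      have : p * q ^ (k + 1 + 1) - q ^ (k + 1 + 1) * p =
          (p * q ^ (k + 1) - q ^ (k + 1) * p) * q + q ^ (k + 1) * (p * q - q * p) := by
        rw [pow_succ q (k + 1)]
        noncomm_ring
      rw [this, ih, hpq, add_sub_cancel_left, mul_one, mul_assoc, ← pow_succ]
      push_cast
      noncomm_ring
  have hp : p * aeval p a = aeval p a * p := by
    simpa using congrArg (aeval p) (mul_comm X a)
  rw [← mul_assoc, hp, mul_assoc, mul_assoc, ← mul_sub, hpow, mul_comm _ a, map_mul, mul_assoc]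
  simp

theorem commutator_mem_normalFiltration {x : A} {n : ℕ}
    (hx : x ∈ normalFiltration K p q (n + 1)) :
    p * x - x * p ∈ normalFiltration K p q n := by
  induction n generalizing x with
  | zero =>
    obtain ⟨r, hr, b, rfl⟩ := mem_normalFiltration_succ.1 hx
    obtain rfl : r = 0 := by simpa [normalFiltration] using hr
    have hp : p * aeval p b = aeval p b * p := by
      simpa using congrArg (aeval p) (mul_comm X b)
    simp [hp]
  | succ n ih =>
    obtain ⟨r, hr, b, rfl⟩ := mem_normalFiltration_succ.1 hx
    refine mem_normalFiltration_succ.2 ⟨_, ih hr, ((n : K[X]) + 1) * b, ?_⟩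
    rw [← commutator_aeval_mul_pow hpq, mul_add, add_mul]
    abel

theorem eq_zero_of_aeval_mul_pow_mem [CharZero K]
    (hinj : Function.Injective (aeval (R := K) p)) {a : K[X]} {n : ℕ}
    (h : aeval p a * q ^ n ∈ normalFiltration K p q n) : a = 0 := by
  induction n generalizing a with
  | zero =>
    refine hinj ?_
    simpa [normalFiltration] using h
  | succ n ih =>
    have := ih (a := ((n : K[X]) + 1) * a) (by
      rw [← commutator_aeval_mul_pow hpq]
      exact commutator_mem_normalFiltration hpq h)
    exact (mul_eq_zero.1 this).resolve_left (Nat.cast_add_one_ne_zero n)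

/-- Subtracting a polynomial in `z` from `w` leaves an element of `K[p]`. -/
theorem exists_eq_aeval_add_aeval_of_commutator [CharZero K]
    (hinj : Function.Injective (aeval (R := K) p)) {f g : K[X]} (hf : f ≠ 0) {w : A} {n : ℕ}
    (hw : w ∈ normalFiltration K p q (n + 1))
    (hc : (aeval p f * q + aeval p g) * w - w * (aeval p f * q + aeval p g) = 1) :
    ∃ b h : K[X], -(f * derivative b) = 1 ∧
      w = aeval p b + aeval (aeval p f * q + aeval p g) h := by
  induction n generalizing w with
  | zero =>
    obtain ⟨r, hr, b, rfl⟩ := mem_normalFiltration_succ.1 hw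
    obtain rfl : r = 0 := by simpa [normalFiltration] using hr
    refine ⟨b, 0, hinj ?_, by simp⟩
    have hmem := degree_one_commutator_sub_mem hpq f g b 0
    rw [zero_add] at hc
    rw [hc] at hmem
    have := (Submodule.mem_bot K).1 hmem
    rw [map_one]
    simpa using (sub_eq_zero.1 this).symm
  | succ n ih =>
    obtain ⟨r, hr, b, rfl⟩ := mem_normalFiltration_succ.1 hw
    set z := aeval p f * q + aeval p g with hz
    have hode : ((n + 1 : ℕ) : K[X]) * b * derivative f - f * derivative b = 0 := by
      refine eq_zero_of_aeval_mul_pow_mem hpq hinj (n := n + 1) ?_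
      have h₁ := degree_one_commutator_sub_mem hpq f g b (n + 1)
      have h₂ := degree_one_commutator_mem hpq f g hr
      have h₃ : (1 : A) ∈ normalFiltration K p q (n + 1) := by
        simpa using aeval_mul_pow_mem_normalFiltration (p := p) (q := q) n.succ_pos (1 : K[X])
      rw [← hz] at h₁ h₂
      convert sub_mem (sub_mem h₃ h₂) h₁ using 1
      rw [← hc, mul_add z, add_mul r]
      abel
    obtain ⟨c, rfl⟩ := exists_eq_C_mul_pow_of_logDerivative hf (sub_eq_zero.1 hode)
    have hmem := degree_one_pow_sub_mem hpq f g (n + 1)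
    rw [← hz] at hmem
    have hzc : z * (c • z ^ (n + 1)) - c • z ^ (n + 1) * z = 0 := by
      rw [mul_smul_comm, smul_mul_assoc, ← pow_succ, ← pow_succ', sub_self]
    have hsub : r + aeval p (C c * f ^ (n + 1)) * q ^ (n + 1) - c • z ^ (n + 1) =
        r - c • (z ^ (n + 1) - aeval p (f ^ (n + 1)) * q ^ (n + 1)) := by
      rw [map_mul, aeval_C, mul_assoc, ← Algebra.smul_def, smul_sub]
      abel
    obtain ⟨b, h, hb, hw'⟩ :=
      ih (w := r + aeval p (C c * f ^ (n + 1)) * q ^ (n + 1) - c • z ^ (n + 1))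
        (by rw [hsub]; exact sub_mem hr (Submodule.smul_mem _ c hmem))
        (by
          rw [mul_sub, sub_mul, sub_sub_sub_comm, hc, hzc, sub_zero])
    refine ⟨b, h + C c * X ^ (n + 1), hb, ?_⟩
    rw [sub_eq_iff_eq_add.1 hw', map_add, map_mul, aeval_C, map_pow, aeval_X, Algebra.smul_def,
      add_assoc]

end NormalOrdering

theorem Wp_mul_Wq (K : Type) [Field K] : Wp K * Wq K = Wq K * Wp K + 1 := by
  simpa [Wp, Wq] using RingQuot.mkAlgHom_rel K (WeylRel.rel (K := K))

/-- The representation of `A₁` on `K[X]` with `p` acting as `X` and `q` as `-d/dX`. -/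
noncomputable def weylRep (K : Type) [Field K] : Weyl K →ₐ[K] Module.End K K[X] :=
  RingQuot.liftAlgHom K ⟨FreeAlgebra.lift K ![LinearMap.mulLeft K X, -derivative], by
    rintro _ _ ⟨⟩
    refine LinearMap.ext fun a => ?_
    simp⟩

theorem aeval_Wp_injective (K : Type) [Field K] :
    Function.Injective (aeval (R := K) (Wp K)) := by
  have hp : weylRep K (Wp K) = Algebra.lmul K K[X] X := by
    simp only [Wp, weylRep, RingQuot.liftAlgHom_mkAlgHom_apply, FreeAlgebra.lift_ι_apply]
    rfl
  intro a b hab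
  have h := congrArg (weylRep K) hab
  rw [← aeval_algHom_apply, ← aeval_algHom_apply, hp, aeval_algHom_apply, aeval_algHom_apply,
    aeval_X_left_apply, aeval_X_left_apply] at h
  exact Algebra.lmul_injective h

theorem exists_mem_normalFiltration_Weyl (K : Type) [Field K] (w : Weyl K) :
    ∃ n, w ∈ normalFiltration K (Wp K) (Wq K) (n + 1) := by
  obtain ⟨x, rfl⟩ := RingQuot.mkAlgHom_surjective K (WeylRel K) w
  suffices h : ∀ n, ∀ v ∈ normalFiltration K (Wp K) (Wq K) n,
      ∃ m, RingQuot.mkAlgHom K (WeylRel K) x * v ∈ normalFiltration K (Wp K) (Wq K) m by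
    obtain ⟨m, hm⟩ := h 1 1 (by
      simpa using aeval_mul_pow_mem_normalFiltration (p := Wp K) (q := Wq K)
        Nat.zero_lt_one (1 : K[X]))
    exact ⟨m, normalFiltration_mono m.le_succ (by simpa using hm)⟩
  induction x using FreeAlgebra.induction with
  | grade0 c =>
    intro n v hv
    refine ⟨n, ?_⟩
    rw [AlgHom.commutes, ← Algebra.smul_def]
    exact Submodule.smul_mem _ c hv
  | grade1 i =>
    intro n v hv
    fin_cases i
    · exact ⟨n, by simpa [Wp] using aeval_mul_mem_normalFiltration X hv⟩
    · exact ⟨n + 1, left_mul_mem_normalFiltration (Wp_mul_Wq K) hv⟩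
  | mul x y hx hy =>
    intro n v hv
    obtain ⟨m, hm⟩ := hy n v hv
    obtain ⟨k, hk⟩ := hx m _ hm
    exact ⟨k, by rwa [map_mul, mul_assoc]⟩
  | add x y hx hy =>
    intro n v hv
    obtain ⟨m, hm⟩ := hy n v hv
    obtain ⟨k, hk⟩ := hx n v hv
    refine ⟨max k m, ?_⟩
    rw [map_add, add_mul]
    exact add_mem (normalFiltration_mono (le_max_left _ _) hk)
      (normalFiltration_mono (le_max_right _ _) hm)

theorem Weyl_subalgebra_eq_top {K : Type} [Field K] {S : Subalgebra K (Weyl K)}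
    (hp : Wp K ∈ S) (hq : Wq K ∈ S) : S = ⊤ := by
  refine eq_top_iff.2 fun w _ => ?_
  obtain ⟨x, rfl⟩ := RingQuot.mkAlgHom_surjective K (WeylRel K) w
  induction x using FreeAlgebra.induction with
  | grade0 c => simp
  | grade1 i =>
    fin_cases i
    · exact hp
    · exact hq
  | mul x y hx hy => simpa using S.mul_mem (hx trivial) (hy trivial)
  | add x y hx hy => simpa using S.add_mem (hx trivial) (hy trivial)

/-- If `[z,w] = 1` and `z = f(p)q + g(p)` with `f ≠ 0`, then `z = αq + g(p)` with
`α ∈ K^*` and `w = γ - α⁻¹ p + h(z)` for some `γ ∈ K`, `h ∈ K[X]`; in particular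
`z` and `w` generate `A₁`. -/
theorem weyl_degree_one_in_q (K : Type) [Field K] [CharZero K]
    (z w : Weyl K) (hc : z * w - w * z = 1)
    (f g : Polynomial K) (hf : f ≠ 0)
    (hz : z = Polynomial.aeval (Wp K) f * Wq K + Polynomial.aeval (Wp K) g) :
    (∃ (α γ : K) (h : Polynomial K), α ≠ 0 ∧
        z = α • Wq K + Polynomial.aeval (Wp K) g ∧
        w = γ • (1 : Weyl K) - α⁻¹ • Wp K + Polynomial.aeval z h) ∧
      Algebra.adjoin K {z, w} = (⊤ : Subalgebra K (Weyl K)) := by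
  subst hz
  obtain ⟨n, hn⟩ := exists_mem_normalFiltration_Weyl K w
  obtain ⟨b, h, hb, hw⟩ := exists_eq_aeval_add_aeval_of_commutator (Wp_mul_Wq K)
    (aeval_Wp_injective K) hf hn hc
  set z := aeval (Wp K) f * Wq K + aeval (Wp K) g with hz
  obtain ⟨α, hα, rfl⟩ := Polynomial.isUnit_iff.1
    (IsUnit.of_mul_eq_one (-derivative b) (by rw [mul_neg, hb]) : IsUnit f)
  have hα0 : α ≠ 0 := hα.ne_zero
  have hb' : derivative (b + C α⁻¹ * X) = 0 := by
    have h1 : (C α⁻¹ * C α : K[X]) = 1 := by rw [← C_mul, inv_mul_cancel₀ hα0, C_1]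
    rw [derivative_add, derivative_C_mul, derivative_X]
    linear_combination -derivative b * h1 - C α⁻¹ * hb
  obtain ⟨γ, hγ⟩ : ∃ γ : K, b + C α⁻¹ * X = C γ :=
    ⟨_, eq_C_of_natDegree_eq_zero (derivative_eq_zero.1 hb')⟩
  have hzα : z = α • Wq K + aeval (Wp K) g := by rw [hz, aeval_C, Algebra.smul_def]
  have hwγ : w = γ • (1 : Weyl K) - α⁻¹ • Wp K + aeval z h := by
    rw [hw, eq_sub_of_add_eq hγ, map_sub, map_mul, aeval_C, aeval_C, aeval_X,
      Algebra.smul_def γ, mul_one, Algebra.smul_def α⁻¹]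
  refine ⟨⟨α, γ, h, hα0, hzα, hwγ⟩, ?_⟩
  set S := Algebra.adjoin K {z, w}
  have hzS : z ∈ S := Algebra.subset_adjoin (by simp)
  have hwS : w ∈ S := Algebra.subset_adjoin (by simp)
  have haeval : ∀ x ∈ S, ∀ a : K[X], aeval x a ∈ S := fun x hx a =>
    Algebra.adjoin_le (Set.singleton_subset_iff.2 hx) (aeval_mem_adjoin_singleton K x)
  have hpS : Wp K ∈ S := by
    have : Wp K = α • (γ • (1 : Weyl K) + aeval z h - w) := by
      have h1 : γ • (1 : Weyl K) + aeval z h - w = α⁻¹ • Wp K := by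
        rw [hwγ]
        abel
      rw [h1, smul_inv_smul₀ hα0]
    rw [this]
    exact S.smul_mem (S.sub_mem (S.add_mem (S.smul_mem S.one_mem γ) (haeval z hzS h)) hwS) α
  have hqS : Wq K ∈ S := by
    have : Wq K = α⁻¹ • (z - aeval (Wp K) g) := by
      rw [hzα, add_sub_cancel_right, inv_smul_smul₀ hα0]
    rw [this]
    exact S.smul_mem (S.sub_mem hzS (haeval _ hpS g)) _
  exact Weyl_subalgebra_eq_top hpS hqS
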